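/- Let λ be any Borel probability measure on S¹ and n ≥ 1. Let w_n and w_{n+1} be probability weight functions on the sets of partitions of {1,…,n} and of {1,…,n+1} respectively, satisfying the consistency relation: for every partition π of {1,…,n}, w_n(π) = w_{n+1}(π ∪ {{n+1}}) + Σ_{B ∈ π} w_{n+1}(π_B), where π ∪ {{n+1}} adjoins {n+1} as a singleton block and π_B adds n+1 to the block B. Then the pushforward of the mixture measure Σ_{π'} w_{n+1}(π') · λ_{π'} under the restriction map (Fin (n+1) → S¹) → (Fin n → S¹) (forgetting the last coordinate) equals Σ_π w_n(π) · λ_π. -/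

import Mathlib

open MeasureTheory

noncomputable section

/-- The circle `ℝ/ℤ`. -/
abbrev Circle1 : Type := AddCircle (1 : ℝ)

/-- `λ_π`: the pushforward of the product measure `λ^{⊗ B(π)}` (one factor for each
block of `π`) under the diagonal-filling map `φ_π`, `(φ_π y)_i = y(B)` for `i ∈ B`. -/
def lambdaPart {m : ℕ} (lam : Measure Circle1)
    (P : Finpartition (Finset.univ : Finset (Fin m))) : Measure (Fin m → Circle1) :=
  (Measure.pi (fun _ : P.parts => lam)).map
    (fun y i => y ⟨P.part i, P.part_mem.2 (Finset.mem_univ i)⟩)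

/-! Forgetting the last coordinate turns `λ_{π'}` into `λ_π`, where `π` is the restriction of `π'`
to `{1,…,n}`. A partition `π'` is determined by its restriction `π` together with the trace on
`{1,…,n}` of the block containing `n + 1`, and this trace is either empty or a block of `π`. So the
partitions restricting to `π` are exactly `π ∪ {{n+1}}` and the `π_B`, and the consistency relation
says that their weights add up to `w_n(π)`. -/

section PiMeasure

open ProbabilityTheory

lemma map_pi_comp_of_injective {α β : Type*} [Fintype α] [Fintype β] {X : β → Type*}
    [∀ b, MeasurableSpace (X b)] (μ : ∀ b, Measure (X b)) [∀ b, IsProbabilityMeasure (μ b)]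
    {g : α → β} (hg : g.Injective) :
    (Measure.pi μ).map (fun y a => y (g a)) = Measure.pi fun a => μ (g a) := by
  have hindep : iIndepFun (fun a (y : ∀ b, X b) => y (g a)) (Measure.pi μ) :=
    (iIndepFun_pi (X := fun _ => id) fun _ => aemeasurable_id).precomp hg
  rw [hindep.map_fun_eq_pi_map fun a => (measurable_pi_apply (g a)).aemeasurable]
  simp only [(measurePreserving_eval μ _).map_eq]

variable {ι α β X : Type*} [Fintype α] [Fintype β] [MeasurableSpace X]
  (μ : Measure X) [IsProbabilityMeasure μ]

lemma map_pi_comp_eq_map_pi_quotient {f : ι → α} {s : Setoid ι} [Fintype (Quotient s)]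
    (hf : Setoid.ker f = s) :
    (Measure.pi fun _ : α => μ).map (fun y i => y (f i)) =
      (Measure.pi fun _ : Quotient s => μ).map (fun y i => y ⟦i⟧) := by
  subst hf
  rw [← map_pi_comp_of_injective (fun _ => μ) (Setoid.kerLift_injective f),
    Measure.map_map (by fun_prop) (by fun_prop)]
  rfl

lemma map_pi_comp_eq_of_ker_eq {f : ι → α} {g : ι → β} (h : Setoid.ker f = Setoid.ker g) :
    (Measure.pi fun _ : α => μ).map (fun y i => y (f i)) =
      (Measure.pi fun _ : β => μ).map (fun y i => y (g i)) := by
  have := Fintype.ofInjective _ (Setoid.kerLift_injective g)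
  exact (map_pi_comp_eq_map_pi_quotient μ h).trans (map_pi_comp_eq_map_pi_quotient μ rfl).symm

end PiMeasure

section Partition

open Finset

lemma parts_eq_image_part {ι : Type*} [DecidableEq ι] {s : Finset ι} (P : Finpartition s) :
    P.parts = s.image P.part := by
  ext B
  constructor
  · exact fun hB => mem_image.2 (P.part_surjOn hB)
  · intro hB
    obtain ⟨i, hi, rfl⟩ := mem_image.1 hB
    exact P.part_mem.2 hi

lemma finpartition_ext_of_part {ι : Type*} [DecidableEq ι] {s : Finset ι} {P Q : Finpartition s}
    (h : ∀ i ∈ s, P.part i = Q.part i) : P = Q :=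
  Finpartition.ext (by rw [parts_eq_image_part, parts_eq_image_part, image_congr h])

variable {ι κ : Type*} [Fintype ι] [Fintype κ] [DecidableEq κ]

/-- The trace on `ι` of the block of `Q` containing `a`, pulled back along `f : ι → κ`.
When `f` misses only `a`, it records the part of `Q` that the pullback to `ι` forgets. -/
def blockTrace (f : ι → κ) (a : κ) (Q : Finpartition (univ : Finset κ)) : Finset ι :=
  {i | f i ∈ Q.part a}

lemma mem_blockTrace {f : ι → κ} {a : κ} {Q : Finpartition (univ : Finset κ)} {i : ι} :
    i ∈ blockTrace f a Q ↔ f i ∈ Q.part a := by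
  simp [blockTrace]

variable [DecidableEq ι]

lemma mem_part_univ_iff {P : Finpartition (univ : Finset ι)} {i j : ι} :
    j ∈ P.part i ↔ P.part j = P.part i :=
  P.mem_part_iff_part_eq_part (mem_univ j) (mem_univ i)

open scoped Classical in
/-- The pullback of a partition of `κ` along `f : ι → κ`: its blocks are the nonempty preimages of
blocks. For an injection `f` this is the restriction of the partition to `ι`. -/
def comapPartition (f : ι → κ) (Q : Finpartition (univ : Finset κ)) :
    Finpartition (univ : Finset ι) :=
  Finpartition.ofSetoid (Setoid.ker fun i => Q.part (f i))

lemma mem_part_comapPartition {f : ι → κ} {Q : Finpartition (univ : Finset κ)} {i j : ι} :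
    j ∈ (comapPartition f Q).part i ↔ f j ∈ Q.part (f i) := by
  classical
  rw [comapPartition, Finpartition.mem_part_ofSetoid_iff_rel, Setoid.ker_def, mem_part_univ_iff,
    eq_comm]

lemma blockTrace_mem_insert_empty_parts (f : ι → κ) (a : κ) (Q : Finpartition (univ : Finset κ)) :
    blockTrace f a Q ∈ insert ∅ (comapPartition f Q).parts := by
  obtain hempty | ⟨i, hi⟩ := (blockTrace f a Q).eq_empty_or_nonempty
  · exact mem_insert.2 (.inl hempty)
  have hblock : blockTrace f a Q = (comapPartition f Q).part i := by
    ext j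
    rw [mem_blockTrace, mem_part_comapPartition, mem_part_univ_iff.1 (mem_blockTrace.1 hi)]
  rw [hblock]
  exact mem_insert_of_mem ((Finpartition.part_mem _).2 (mem_univ i))

lemma eq_of_comapPartition_eq_of_blockTrace_eq {f : ι → κ} {a : κ} (ha : {a}ᶜ ⊆ Set.range f)
    {Q Q' : Finpartition (univ : Finset κ)} (hcomap : comapPartition f Q = comapPartition f Q')
    (htrace : blockTrace f a Q = blockTrace f a Q') : Q = Q' := by
  have hpoint (i : ι) : f i ∈ Q.part a ↔ f i ∈ Q'.part a := by
    rw [← mem_blockTrace, ← mem_blockTrace, htrace]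
  refine finpartition_ext_of_part fun k _ => Finset.ext fun l => ?_
  obtain rfl | hk := eq_or_ne a k <;> obtain rfl | hl := eq_or_ne a l
  · simp only [Finpartition.mem_part_self, mem_univ]
  · obtain ⟨i, rfl⟩ := ha hl.symm
    exact hpoint i
  · obtain ⟨i, rfl⟩ := ha hk.symm
    simpa only [mem_part_univ_iff, eq_comm] using hpoint i
  · obtain ⟨i, rfl⟩ := ha hk.symm
    obtain ⟨j, rfl⟩ := ha hl.symm
    rw [← mem_part_comapPartition, ← mem_part_comapPartition, hcomap]

/-- `Q` arises from the partition `P` of `ι` by adding the new point `a` to the block `B`. The case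
`B = ∅` is allowed and means that `{a}` becomes a block of its own. -/
structure IsPointExtension (e : ι ↪ κ) (a : κ) (P : Finpartition (univ : Finset ι)) (B : Finset ι)
    (Q : Finpartition (univ : Finset κ)) : Prop where
  mem : B ∈ insert ∅ P.parts
  parts_eq : Q.parts = insert (insert a (B.map e)) ((P.parts.erase B).image (Finset.map e))

namespace IsPointExtension

variable {e : ι ↪ κ} {a : κ} {P : Finpartition (univ : Finset ι)} {B : Finset ι}
  {Q : Finpartition (univ : Finset κ)}

lemma blockTrace_eq (h : IsPointExtension e a P B Q) (ha : a ∉ Set.range e) :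
    blockTrace e a Q = B := by
  have hblock : Q.part a = insert a (B.map e) :=
    Q.part_eq_of_mem (h.parts_eq ▸ mem_insert_self _ _) (mem_insert_self _ _)
  ext i
  have hi : e i ≠ a := fun hi => ha ⟨i, hi⟩
  simp [mem_blockTrace, hblock, hi]

lemma comapPartition_eq (h : IsPointExtension e a P B Q) (ha : a ∉ Set.range e) :
    comapPartition e Q = P := by
  refine finpartition_ext_of_part fun i _ => Finset.ext fun j => ?_
  have hne (k : ι) : e k ≠ a := fun hk => ha ⟨k, hk⟩
  have hsplit : (∃ C ∈ P.parts, j ∈ C ∧ i ∈ C) ↔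
      (j ∈ B ∧ i ∈ B) ∨ ∃ C ∈ P.parts.erase B, j ∈ C ∧ i ∈ C := by
    obtain rfl | hB := mem_insert.1 h.mem
    · simp
    · rw [← exists_mem_insert _ _ fun C => j ∈ C ∧ i ∈ C, insert_erase hB]
  rw [mem_part_comapPartition, Finpartition.mem_part_iff_exists, Finpartition.mem_part_iff_exists,
    hsplit, h.parts_eq, exists_mem_insert, exists_mem_image]
  simp [hne]

end IsPointExtension

lemma sum_comapPartition_fiber {M : Type*} [AddCommMonoid M] {e : ι ↪ κ} {a : κ}
    (ha : Set.range e = {a}ᶜ) {P : Finpartition (univ : Finset ι)}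
    {ext : Finset ι → Finpartition (univ : Finset κ)}
    (hext : ∀ B ∈ insert ∅ P.parts, IsPointExtension e a P B (ext B))
    (f : Finpartition (univ : Finset κ) → M) :
    ∑ Q with comapPartition e Q = P, f Q = ∑ B ∈ insert ∅ P.parts, f (ext B) := by
  have ha' : a ∉ Set.range e := by simp [ha]
  have hcomap (B) (hB : B ∈ insert ∅ P.parts) : comapPartition e (ext B) = P :=
    (hext B hB).comapPartition_eq ha'
  have htrace (B) (hB : B ∈ insert ∅ P.parts) : blockTrace e a (ext B) = B :=
    (hext B hB).blockTrace_eq ha'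
  have hmem (Q) (hQ : comapPartition e Q = P) : blockTrace e a Q ∈ insert ∅ P.parts :=
    hQ ▸ blockTrace_mem_insert_empty_parts e a Q
  have hinv (Q) (hQ : comapPartition e Q = P) : ext (blockTrace e a Q) = Q :=
    eq_of_comapPartition_eq_of_blockTrace_eq ha.ge ((hcomap _ (hmem Q hQ)).trans hQ.symm)
      (htrace _ (hmem Q hQ))
  refine sum_nbij' (blockTrace e a) ext ?_ ?_ ?_ htrace ?_ <;> simp only [mem_filter_univ]
  · exact hmem
  · exact hcomap
  · exact hinv
  · exact fun Q hQ => by rw [hinv Q hQ]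

end Partition

section BlockMeasure

open Finset
open scoped ENNReal

variable {ι κ X : Type*} [Fintype ι] [DecidableEq ι] [Fintype κ] [DecidableEq κ]
  [MeasurableSpace X]

/-- The law of a random point of `ι → X` which is constant on the blocks of `P`, its values on the
blocks being independent with law `μ`. For `X = ℝ/ℤ` and `ι = {1,…,m}` this is `lambdaPart`. -/
def blockMeasure (μ : Measure X) (P : Finpartition (univ : Finset ι)) : Measure (ι → X) :=
  (Measure.pi fun _ : P.parts => μ).map fun y i => y ⟨P.part i, P.part_mem.2 (mem_univ i)⟩

variable (μ : Measure X) [IsProbabilityMeasure μ]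

lemma map_comp_blockMeasure (f : ι → κ) (Q : Finpartition (univ : Finset κ)) :
    (blockMeasure μ Q).map (fun x i => x (f i)) = blockMeasure μ (comapPartition f Q) := by
  rw [blockMeasure, blockMeasure, Measure.map_map (by fun_prop) (by fun_prop)]
  refine map_pi_comp_eq_of_ker_eq μ (Setoid.ext fun i j => ?_)
  simp only [Setoid.ker_def, Subtype.mk.injEq, ← mem_part_univ_iff, mem_part_comapPartition]

lemma map_comp_sum_smul_blockMeasure (f : ι → κ) (w : Finpartition (univ : Finset κ) → ℝ≥0∞) :
    (∑ Q, w Q • blockMeasure μ Q).map (fun x i => x (f i)) =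
      ∑ P, (∑ Q with comapPartition f Q = P, w Q) • blockMeasure μ P := by
  have hmeas : Measurable fun (x : κ → X) i => x (f i) := by fun_prop
  rw [Measure.map_finset_sum' hmeas.aemeasurable]
  simp only [Measure.map_smul, map_comp_blockMeasure]
  rw [← sum_fiberwise univ (comapPartition f)]
  refine sum_congr rfl fun P _ => ?_
  rw [sum_smul]
  exact sum_congr rfl fun Q hQ => by rw [(mem_filter.1 hQ).2]

theorem mixture_consistent_general (e : ι ↪ κ) {a : κ} (ha : Set.range e = {a}ᶜ)
    (w : Finpartition (univ : Finset ι) → ℝ≥0∞) (w' : Finpartition (univ : Finset κ) → ℝ≥0∞)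
    (ext0 : Finpartition (univ : Finset ι) → Finpartition (univ : Finset κ))
    (hext0 : ∀ P, (ext0 P).parts = insert {a} (P.parts.image (Finset.map e)))
    (extB : Finpartition (univ : Finset ι) → Finset ι → Finpartition (univ : Finset κ))
    (hextB : ∀ P, ∀ B ∈ P.parts, (extB P B).parts =
      insert (insert a (B.map e)) ((P.parts.erase B).image (Finset.map e)))
    (hcons : ∀ P, w P = w' (ext0 P) + ∑ B ∈ P.parts, w' (extB P B)) :
    (∑ P', w' P' • blockMeasure μ P').map (fun x i => x (e i)) = ∑ P, w P • blockMeasure μ P := by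
  rw [map_comp_sum_smul_blockMeasure]
  refine sum_congr rfl fun P _ => ?_
  have hext : ∀ B ∈ insert ∅ P.parts,
      IsPointExtension e a P B (Function.update (extB P) ∅ (ext0 P) B) := by
    simp only [forall_mem_insert, Function.update_self]
    refine ⟨⟨mem_insert_self _ _, by simp [hext0]⟩, fun B hB => ?_⟩
    rw [Function.update_of_ne (P.ne_empty hB)]
    exact ⟨mem_insert_of_mem hB, hextB P B hB⟩
  rw [sum_comapPartition_fiber ha hext, sum_insert P.empty_notMem_parts, Function.update_self,
    hcons]
  congr 2
  exact sum_congr rfl fun B hB => by rw [Function.update_of_ne (P.ne_empty hB)]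

end BlockMeasure

/-- let `w` and `w'` be probability weight functions on the partitions of
`{1,…,n}` and of `{1,…,n+1}` satisfying the consistency relation
`w(π) = w'(π ∪ {{n+1}}) + Σ_{B ∈ π} w'(π_B)`, where `π ∪ {{n+1}}` adjoins `{n+1}` as a
singleton block (the map `ext0`) and `π_B` adds `n+1` to the block `B` (the map `extB`).
Then the pushforward of the mixture `Σ_{π'} w'(π') · λ_{π'}` under the map forgetting
the last coordinate equals `Σ_π w(π) · λ_π`. -/
theorem mixture_consistent (lam : Measure Circle1) [IsProbabilityMeasure lam]
    (n : ℕ) (hn : 1 ≤ n)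
    (w : Finpartition (Finset.univ : Finset (Fin n)) → ℝ)
    (w' : Finpartition (Finset.univ : Finset (Fin (n + 1))) → ℝ)
    (hw0 : ∀ P, 0 ≤ w P)
    (hw1 : ∑ P : Finpartition (Finset.univ : Finset (Fin n)), w P = 1)
    (hw'0 : ∀ P', 0 ≤ w' P')
    (hw'1 : ∑ P' : Finpartition (Finset.univ : Finset (Fin (n + 1))), w' P' = 1)
    (ext0 : Finpartition (Finset.univ : Finset (Fin n)) →
      Finpartition (Finset.univ : Finset (Fin (n + 1))))
    (hext0 : ∀ P, (ext0 P).parts =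
      insert {Fin.last n} (P.parts.image (Finset.map Fin.castSuccEmb)))
    (extB : Finpartition (Finset.univ : Finset (Fin n)) → Finset (Fin n) →
      Finpartition (Finset.univ : Finset (Fin (n + 1))))
    (hextB : ∀ P B, B ∈ P.parts → (extB P B).parts =
      insert (insert (Fin.last n) (B.map Fin.castSuccEmb))
        ((P.parts.erase B).image (Finset.map Fin.castSuccEmb)))
    (hcons : ∀ P : Finpartition (Finset.univ : Finset (Fin n)),
      w P = w' (ext0 P) + ∑ B ∈ P.parts, w' (extB P B)) :
    (∑ P' : Finpartition (Finset.univ : Finset (Fin (n + 1))),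
        ENNReal.ofReal (w' P') • lambdaPart lam P').map (fun x (i : Fin n) => x i.castSucc)
      = ∑ P : Finpartition (Finset.univ : Finset (Fin n)),
          ENNReal.ofReal (w P) • lambdaPart lam P :=
  mixture_consistent_general lam Fin.castSuccEmb
    (by simpa using Fin.range_succAbove (Fin.last n)) _ _ ext0 hext0 extB hextB fun P => by
      rw [hcons, ENNReal.ofReal_add (hw'0 _) (Finset.sum_nonneg fun _ _ => hw'0 _),
        ENNReal.ofReal_sum_of_nonneg fun _ _ => hw'0 _]

end
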